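/- Let n, Δ > 0, p, q ≥ 1. Let Ĝ^{αα} ∈ ℝ^{p×p} and Ĝ^{ββ} ∈ ℝ^{q×q} be symmetric positive definite, and set the scaled matrices D̂^{αα} = (1/(nΔ)) Ĝ^{αα} and D̂^{ββ} = (1/n) Ĝ^{ββ}. Let λ₁, λ₂, γ₁, γ₂ ≥ 0, let κ ∈ ℝ^p and π ∈ ℝ^q be nonnegative weight vectors, and let α̃ ∈ ℝ^p, β̃ ∈ ℝ^q. Let α̂ be a global minimizer of F₁(α) = (α−α̃)ᵀĜ^{αα}(α−α̃) + λ₁ Σ_{j=1}^p κ_j|α_j| + λ₂|α|², and β̂ a global minimizer of F₂(β) = (β−β̃)ᵀĜ^{ββ}(β−β̃) + γ₁ Σ_{h=1}^q π_h|β_h| + γ₂|β|². Then for any α₀ ∈ ℝ^p and β₀ ∈ ℝ^q: |α̂ − α₀| ≤ (2/(nΔ τ_min(D̂^{αα}) + λ₂)) ( λ₂|α₀| + nΔ τ_max(D̂^{αα}) |α̃ − α₀| + λ₁|κ| ), and |β̂ − β₀| ≤ (2/(n τ_min(D̂^{ββ}) + γ₂)) ( γ₂|β₀| + n τ_max(D̂^{ββ})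 |β̃ − β₀| + γ₁|π| ), where |κ|, |π| denote Euclidean norms of the weight vectors. -/

import Mathlib

/-!
Both bounds are one statement about a positive definite matrix `G = c • D`. Compare the objective at
the minimizer `a` with its value at the reference point `a0`. With `d = a - a0` and `e = a0 - t`,
expanding the two quadratic parts turns `F a ≤ F a0` into
`dᵀGd + l2 |d|² ≤ -2 dᵀGe - 2 l2 ⟨d, a0⟩ + l1 ∑ κ_j (|a0_j| - |a_j|)`.
The left side is at least `(c τ_min(D) + l2) |d|²` by the Rayleigh bound, and the right side is at
most `2 |d| (c τ_max(D) |e| + l2 |a0| + l1 |κ|)` by the Cauchy-Schwarz inequality, for the form `G`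
and for the Euclidean inner product. Dividing by `|d|` gives the bound.
-/

open Matrix

/-- smallest eigenvalue (infimum of the real spectrum) of a square real matrix -/
noncomputable def tauMin {p : ℕ} (M : Matrix (Fin p) (Fin p) ℝ) : ℝ :=
  sInf (spectrum ℝ M)

/-- largest eigenvalue (supremum of the real spectrum) of a square real matrix -/
noncomputable def tauMax {p : ℕ} (M : Matrix (Fin p) (Fin p) ℝ) : ℝ :=
  sSup (spectrum ℝ M)

/-- Lower Rayleigh bound: `M - τ_min(M) I` is positive semidefinite, its spectrum being shifted. -/
lemma tauMin_mul_le {p : ℕ} {M : Matrix (Fin p) (Fin p) ℝ} (hM : M.IsHermitian)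
    (x : Fin p → ℝ) : tauMin M * (x ⬝ᵥ x) ≤ x ⬝ᵥ (M *ᵥ x) := by
  have h : (M - algebraMap ℝ _ (tauMin M)).PosSemidef := by
    rw [Matrix.posSemidef_iff_isHermitian_and_spectrum_nonneg]
    refine ⟨hM.sub (by simp [Matrix.IsHermitian, Matrix.algebraMap_eq_diagonal]), ?_⟩
    rw [← spectrum.sub_singleton_eq]
    rintro y ⟨z, hz, w, rfl, rfl⟩
    exact sub_nonneg.2 (csInf_le M.finite_real_spectrum.bddBelow hz)
  have := h.dotProduct_mulVec_nonneg x
  simp only [star_trivial, Matrix.sub_mulVec, dotProduct_sub, Algebra.algebraMap_eq_smul_one,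
    Matrix.smul_mulVec, Matrix.one_mulVec, dotProduct_smul, smul_eq_mul] at this
  linarith

/-- Upper Rayleigh bound, from positive semidefiniteness of `τ_max(M) I - M`. -/
lemma le_tauMax_mul {p : ℕ} {M : Matrix (Fin p) (Fin p) ℝ} (hM : M.IsHermitian)
    (x : Fin p → ℝ) : x ⬝ᵥ (M *ᵥ x) ≤ tauMax M * (x ⬝ᵥ x) := by
  have h : (algebraMap ℝ _ (tauMax M) - M).PosSemidef := by
    rw [Matrix.posSemidef_iff_isHermitian_and_spectrum_nonneg]
    refine ⟨Matrix.IsHermitian.sub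
      (by simp [Matrix.IsHermitian, Matrix.algebraMap_eq_diagonal]) hM, ?_⟩
    rw [← spectrum.singleton_sub_eq]
    rintro y ⟨w, rfl, z, hz, rfl⟩
    exact sub_nonneg.2 (le_csSup M.finite_real_spectrum.bddAbove hz)
  have := h.dotProduct_mulVec_nonneg x
  simp only [star_trivial, Matrix.sub_mulVec, dotProduct_sub, Algebra.algebraMap_eq_smul_one,
    Matrix.smul_mulVec, Matrix.one_mulVec, dotProduct_smul, smul_eq_mul] at this
  linarith

lemma spectrum_pos_of_posDef {p : ℕ} {M : Matrix (Fin p) (Fin p) ℝ} (hM : M.PosDef)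
    {y : ℝ} (hy : y ∈ spectrum ℝ M) : 0 < y := by
  rw [hM.isHermitian.spectrum_real_eq_range_eigenvalues] at hy
  obtain ⟨i, rfl⟩ := hy
  exact hM.eigenvalues_pos i

lemma tauMin_pos {p : ℕ} (hp : 1 ≤ p) {M : Matrix (Fin p) (Fin p) ℝ} (hM : M.PosDef) :
    0 < tauMin M := by
  have hne : (spectrum ℝ M).Nonempty := by
    rw [hM.isHermitian.spectrum_real_eq_range_eigenvalues]
    exact ⟨_, ⟨0, hp⟩, rfl⟩
  exact spectrum_pos_of_posDef hM (hne.csInf_mem M.finite_real_spectrum)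

lemma tauMax_nonneg {p : ℕ} {M : Matrix (Fin p) (Fin p) ℝ} (hM : M.PosDef) :
    0 ≤ tauMax M :=
  Real.sSup_nonneg fun _ hy => (spectrum_pos_of_posDef hM hy).le

/-- Expansion of the quadratic form of a real symmetric matrix. -/
lemma quad_add {p : ℕ} {M : Matrix (Fin p) (Fin p) ℝ} (hM : M.IsHermitian)
    (x y : Fin p → ℝ) :
    (x + y) ⬝ᵥ (M *ᵥ (x + y)) = x ⬝ᵥ (M *ᵥ x) + 2 * (x ⬝ᵥ (M *ᵥ y)) + y ⬝ᵥ (M *ᵥ y) := by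
  have hs : y ⬝ᵥ (M *ᵥ x) = x ⬝ᵥ (M *ᵥ y) := by
    have hT : Mᵀ = M := by simpa [Matrix.IsHermitian] using hM
    rw [dotProduct_comm, ← Matrix.vecMul_transpose, hT, Matrix.dotProduct_mulVec]
  simp only [Matrix.mulVec_add, add_dotProduct, dotProduct_add, hs]
  ring

/-- Cauchy-Schwarz for the form of `M`, followed by the upper Rayleigh bound on both factors. -/
lemma abs_form_le {p : ℕ} {M : Matrix (Fin p) (Fin p) ℝ} (hM : M.PosDef)
    (x y : EuclideanSpace ℝ (Fin p)) :
    |x.ofLp ⬝ᵥ (M *ᵥ y.ofLp)| ≤ tauMax M * ‖x‖ * ‖y‖ := by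
  have hn (z : EuclideanSpace ℝ (Fin p)) : z.ofLp ⬝ᵥ z.ofLp = ‖z‖ ^ 2 := by
    rw [EuclideanSpace.real_norm_sq_eq]; simp [dotProduct, sq]
  have hτ := tauMax_nonneg hM
  have hx0 := hM.posSemidef.dotProduct_mulVec_nonneg x.ofLp
  have hy0 := hM.posSemidef.dotProduct_mulVec_nonneg y.ofLp
  simp only [star_trivial] at hx0 hy0
  have hx := le_tauMax_mul hM.isHermitian x.ofLp
  have hy := le_tauMax_mul hM.isHermitian y.ofLp
  rw [hn] at hx hy
  -- The quadratic polynomial `t ↦ (t x + y)ᵀ M (t x + y)` is nonnegative.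
  have hd := discrim_le_zero (a := x.ofLp ⬝ᵥ (M *ᵥ x.ofLp)) (b := 2 * (x.ofLp ⬝ᵥ (M *ᵥ y.ofLp)))
    (c := y.ofLp ⬝ᵥ (M *ᵥ y.ofLp)) (fun t => by
      have h := hM.posSemidef.dotProduct_mulVec_nonneg (t • x.ofLp + y.ofLp)
      rw [star_trivial, quad_add hM.isHermitian] at h
      simp only [Matrix.mulVec_smul, smul_dotProduct, dotProduct_smul, smul_eq_mul] at h
      linarith)
  rw [discrim] at hd
  have hmul := mul_le_mul hx hy hy0 (by positivity)
  refine abs_le_of_sq_le_sq (by nlinarith) (by positivity)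

/-- The error bound for a single parameter block, with `c` the scaling constant of the block. -/
lemma block_bound {p : ℕ} (hp : 1 ≤ p) {c : ℝ} (hc : 0 < c)
    {G : Matrix (Fin p) (Fin p) ℝ} (hG : G.PosDef) {l1 l2 : ℝ} (hl1 : 0 ≤ l1) (hl2 : 0 ≤ l2)
    (κ : EuclideanSpace ℝ (Fin p)) (hκ : ∀ j, 0 ≤ κ j) (t a a0 : EuclideanSpace ℝ (Fin p))
    (h : (a - t).ofLp ⬝ᵥ (G *ᵥ (a - t).ofLp) + l1 * ∑ j, κ j * |a j| + l2 * ‖a‖ ^ 2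
      ≤ (a0 - t).ofLp ⬝ᵥ (G *ᵥ (a0 - t).ofLp) + l1 * ∑ j, κ j * |a0 j| + l2 * ‖a0‖ ^ 2) :
    ‖a - a0‖ ≤ 2 / (c * tauMin ((1 / c) • G) + l2) *
      (l2 * ‖a0‖ + c * tauMax ((1 / c) • G) * ‖t - a0‖ + l1 * ‖κ‖) := by
  have hD : ((1 / c) • G).PosDef := hG.smul (by positivity)
  have hGD : G = c • ((1 / c) • G) := by rw [smul_smul, mul_one_div_cancel hc.ne', one_smul]
  set D := (1 / c) • G with hDdef
  clear_value D
  subst hGD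
  have hmin := tauMin_pos hp hD
  have hmax := tauMax_nonneg hD
  set d := a - a0 with hd
  set e := a0 - t with he
  have hat : a - t = d + e := by simp [hd, he]
  have hray := tauMin_mul_le hD.isHermitian d.ofLp
  have hnd : d.ofLp ⬝ᵥ d.ofLp = ‖d‖ ^ 2 := by
    rw [EuclideanSpace.real_norm_sq_eq]; simp [dotProduct, sq]
  have hcs := (abs_le.1 (abs_form_le hD d e)).1
  rw [hat, WithLp.ofLp_add] at h
  simp only [Matrix.smul_mulVec, dotProduct_smul, smul_eq_mul] at h
  rw [quad_add hD.isHermitian] at h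
  have ha : ‖a‖ ^ 2 = ‖d‖ ^ 2 + 2 * inner ℝ d a0 + ‖a0‖ ^ 2 := by
    rw [← norm_add_sq_real]; simp [hd]
  have hin := (abs_le.1 (abs_real_inner_le_norm d a0)).1
  -- Reverse triangle inequality coordinatewise, then Cauchy-Schwarz with the vector `(|d_j|)`.
  have hpen : ∑ j, κ j * |a0 j| - ∑ j, κ j * |a j| ≤ ‖κ‖ * ‖d‖ := by
    rw [← Finset.sum_sub_distrib]
    calc ∑ j, (κ j * |a0 j| - κ j * |a j|) ≤ ∑ j, κ j * |d j| := by
          refine Finset.sum_le_sum fun j _ => ?_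
          rw [← mul_sub]
          refine mul_le_mul_of_nonneg_left ?_ (hκ j)
          have := abs_sub_abs_le_abs_sub (a0 j) (a j)
          rwa [abs_sub_comm] at this
      _ ≤ ‖κ‖ * ‖d‖ := by
          have := Real.sum_mul_le_sqrt_mul_sqrt Finset.univ (fun j => κ j) (fun j => |d j|)
          simpa [EuclideanSpace.norm_eq] using this
  have het : ‖t - a0‖ = ‖e‖ := norm_sub_rev _ _
  rw [het, div_mul_eq_mul_div, le_div_iff₀ (by positivity)]
  rw [hnd] at hray
  rw [ha] at h
  have h1 := mul_le_mul_of_nonneg_left hray hc.le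
  have h2 := mul_le_mul_of_nonneg_left hcs hc.le
  have h3 := mul_le_mul_of_nonneg_left hin hl2
  have h4 := mul_le_mul_of_nonneg_left hpen hl1
  have h5 : 0 ≤ l1 * (‖κ‖ * ‖d‖) := by positivity
  rcases (norm_nonneg d).eq_or_lt with h0 | h0
  · rw [← h0]; simp only [zero_mul]; positivity
  · refine le_of_mul_le_mul_right ?_ h0
    linarith

/-- non-asymptotic error bounds for the block-diagonal Elastic-Net
estimator: with scaled information matrices `D̂^{αα} = (1/(nΔ))Ĝ^{αα}` and
`D̂^{ββ} = (1/n)Ĝ^{ββ}`, the minimizers `α̂` of `F₁` and `β̂` of `F₂` satisfy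
`|α̂−α₀| ≤ (2/(nΔτ_min(D̂^{αα})+λ₂))(λ₂|α₀| + nΔτ_max(D̂^{αα})|α̃−α₀| + λ₁|κ|)` and
`|β̂−β₀| ≤ (2/(nτ_min(D̂^{ββ})+γ₂))(γ₂|β₀| + nτ_max(D̂^{ββ})|β̃−β₀| + γ₁|π|)`. -/
theorem stmt_7 (p q : ℕ) (hp : 1 ≤ p) (hq : 1 ≤ q)
    (n Δ : ℝ) (hn : 0 < n) (hΔ : 0 < Δ)
    (Ga : Matrix (Fin p) (Fin p) ℝ) (hGa : Ga.PosDef)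
    (Gb : Matrix (Fin q) (Fin q) ℝ) (hGb : Gb.PosDef)
    (lam1 lam2 gam1 gam2 : ℝ)
    (hl1 : 0 ≤ lam1) (hl2 : 0 ≤ lam2) (hg1 : 0 ≤ gam1) (hg2 : 0 ≤ gam2)
    (κ : EuclideanSpace ℝ (Fin p)) (hκ : ∀ j, 0 ≤ κ j)
    (π : EuclideanSpace ℝ (Fin q)) (hπ : ∀ h, 0 ≤ π h)
    (tα : EuclideanSpace ℝ (Fin p)) (tβ : EuclideanSpace ℝ (Fin q))
    (F1 : EuclideanSpace ℝ (Fin p) → ℝ)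
    (hF1 : ∀ α, F1 α = (α - tα) ⬝ᵥ (Ga *ᵥ (α - tα)) + lam1 * ∑ j, κ j * |α j|
      + lam2 * ‖α‖ ^ 2)
    (F2 : EuclideanSpace ℝ (Fin q) → ℝ)
    (hF2 : ∀ β, F2 β = (β - tβ) ⬝ᵥ (Gb *ᵥ (β - tβ)) + gam1 * ∑ h, π h * |β h|
      + gam2 * ‖β‖ ^ 2)
    (αhat : EuclideanSpace ℝ (Fin p)) (hαhat : ∀ α, F1 αhat ≤ F1 α)
    (βhat : EuclideanSpace ℝ (Fin q)) (hβhat : ∀ β, F2 βhat ≤ F2 β)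
    (α0 : EuclideanSpace ℝ (Fin p)) (β0 : EuclideanSpace ℝ (Fin q)) :
    ‖αhat - α0‖ ≤ 2 / (n * Δ * tauMin ((1 / (n * Δ)) • Ga) + lam2) *
        (lam2 * ‖α0‖ + n * Δ * tauMax ((1 / (n * Δ)) • Ga) * ‖tα - α0‖ + lam1 * ‖κ‖) ∧
      ‖βhat - β0‖ ≤ 2 / (n * tauMin ((1 / n) • Gb) + gam2) *
        (gam2 * ‖β0‖ + n * tauMax ((1 / n) • Gb) * ‖tβ - β0‖ + gam1 * ‖π‖) := by
  have h1 := hαhat α0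
  have h2 := hβhat β0
  rw [hF1, hF1] at h1
  rw [hF2, hF2] at h2
  exact ⟨block_bound hp (mul_pos hn hΔ) hGa hl1 hl2 κ hκ tα αhat α0 h1,
    block_bound hq hn hGb hg1 hg2 π hπ tβ βhat β0 h2⟩
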